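/- arXiv:0803.2960 — 2 statements merged into one kernel-verified Lean document; each statement's English description precedes it below -/
import Mathlib

section
/- Let n ≥ 1, let K be a field, and let S ⊆ [1,n] × [1,n] be an order ideal for the partial order (i,j) ≤ (r,s) ⟺ (i ≥ r and j ≤ s). Then 𝔟[S] is invariant under conjugation by the Borel subgroup of upper triangular matrices: for every invertible upper triangular n × n matrix b over K and every X ∈ 𝔟[S], the matrix b X b⁻¹ again lies in 𝔟[S]. -/
/-!
The entry `(A * X * B) i j` of a product with upper triangular outer factors is a combination of the
entries `X k l` with `i ≤ k` and `l ≤ j`. These positions lie below `(i, j)`, so an order ideal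
containing `(i, j)` contains them all. The strictly lower triangular positions themselves form an
order ideal, so preservation of upper triangularity is an instance of the same fact.
-/

section BlockTriangular

variable {m n α R : Type*} [LinearOrder α]

theorem mul_apply_eq_zero_of_blockTriangular_left [Fintype m] [NonUnitalNonAssocSemiring R]
    {c : m → α} {A : Matrix m m R} {X : Matrix m n R} (hA : A.BlockTriangular c) {i : m} {j : n}
    (hX : ∀ k, c i ≤ c k → X k j = 0) : (A * X) i j = 0 := by
  rw [Matrix.mul_apply]
  refine Finset.sum_eq_zero fun k _ => ?_
  rcases lt_or_ge (c k) (c i) with hki | hik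
  · rw [hA hki, zero_mul]
  · rw [hX k hik, mul_zero]

theorem mul_apply_eq_zero_of_blockTriangular_right [Fintype n] [NonUnitalNonAssocSemiring R]
    {c : n → α} {X : Matrix m n R} {B : Matrix n n R} (hB : B.BlockTriangular c) {i : m} {j : n}
    (hX : ∀ l, c l ≤ c j → X i l = 0) : (X * B) i j = 0 := by
  rw [Matrix.mul_apply]
  refine Finset.sum_eq_zero fun l _ => ?_
  rcases lt_or_ge (c j) (c l) with hjl | hlj
  · rw [hB hjl, mul_zero]
  · rw [hX l hlj, zero_mul]

theorem stmt1_general [Fintype m] [DecidableEq m] [CommRing R] {c : m → α} {S : Set (m × m)}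
    (hS : ∀ r s i j, (r, s) ∈ S → c r ≤ c i → c j ≤ c s → (i, j) ∈ S)
    {A X : Matrix m m R} (hA : IsUnit A) (hAc : A.BlockTriangular c)
    (hX : ∀ i j, (i, j) ∈ S → X i j = 0) (i j : m) (hij : (i, j) ∈ S) :
    (A * X * A⁻¹) i j = 0 := by
  have : Invertible A := hA.invertible
  have hAinv : A⁻¹.BlockTriangular c := Matrix.blockTriangular_inv_of_blockTriangular hAc
  exact mul_apply_eq_zero_of_blockTriangular_right hAinv fun l hlj =>
    mul_apply_eq_zero_of_blockTriangular_left hAc fun k hik => hX k l (hS i j k l hij hik hlj)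

end BlockTriangular

/-- 𝔟[S] is invariant under conjugation by the Borel of upper triangular matrices:
for an order ideal `S` (for the order `(i,j) ≤ (r,s) ↔ i ≥ r ∧ j ≤ s`),
if `b` is an invertible upper triangular matrix and `X` is upper triangular vanishing
on `S`, then `b * X * b⁻¹` is again upper triangular and vanishes on `S`. -/
theorem stmt1 (n : ℕ) (hn : 1 ≤ n) (K : Type*) [Field K]
    (S : Set (Fin n × Fin n))
    (hS : ∀ r s i j : Fin n, (r, s) ∈ S → r ≤ i → j ≤ s → (i, j) ∈ S)
    (b : Matrix (Fin n) (Fin n) K) (hb : IsUnit b)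
    (hbu : ∀ i j : Fin n, j < i → b i j = 0)
    (X : Matrix (Fin n) (Fin n) K)
    (hX : ∀ i j : Fin n, j < i → X i j = 0)
    (hXS : ∀ i j : Fin n, (i, j) ∈ S → X i j = 0) :
    (∀ i j : Fin n, j < i → (b * X * b⁻¹) i j = 0) ∧
    (∀ i j : Fin n, (i, j) ∈ S → (b * X * b⁻¹) i j = 0) := by
  have hbt : b.BlockTriangular id := fun i j => hbu i j
  exact ⟨stmt1_general (S := {p | p.2 < p.1})
    (fun _ _ _ _ hsr hri hjs => (hjs.trans_lt hsr).trans_le hri) hb hbt hX,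
    stmt1_general hS hb hbt hXS⟩
end

section
/- Let K be a field, let n ≥ 1 and 1 ≤ r ≤ n. Let g be an invertible lower triangular n × n matrix over K and let M be an n × n matrix over K such that the submatrix of M consisting of its first r rows has rank strictly less than r. Then the determinant of the top-left r × r block of g M g⁻¹ is zero: det((g M g⁻¹)_{≤r,≤r}) = 0. -/
/-!
Lower triangularity of `g` says that the first `r` rows of `g * M` are combinations of the first `r`
rows of `M` alone. They therefore span a space of dimension `< r`, and this survives right
multiplication by `g⁻¹`, or by any other matrix, and passing to the first `r` columns.
-/

section Rank

open Matrix

variable {R k l m n o p : Type*} [Fintype n]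

theorem submatrix_mul_eq_of_notMem_range [Fintype m] [NonUnitalNonAssocSemiring R]
    {A : Matrix k n R} {f : l → k} {e : m → n} (he : Function.Injective e)
    (hA : ∀ i, ∀ j ∉ Set.range e, A (f i) j = 0) (B : Matrix n o R) (c : p → o) :
    (A * B).submatrix f c = A.submatrix f e * B.submatrix e c := by
  ext i j
  simp only [submatrix_apply, mul_apply]
  refine (Fintype.sum_of_injective e he _ _ (fun x hx => ?_) fun _ => rfl).symm
  rw [hA i x hx, zero_mul]

theorem rank_submatrix_mul_le_of_notMem_range [CommSemiring R] [StrongRankCondition R] [Fintype o]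
    {A : Matrix k n R} {f : l → k} {e : m → n} (he : Function.Injective e)
    (hA : ∀ i, ∀ j ∉ Set.range e, A (f i) j = 0) (B : Matrix n o R) :
    ((A * B).submatrix f id).rank ≤ (B.submatrix e id).rank := by
  have := Fintype.ofInjective e he
  rw [submatrix_mul_eq_of_notMem_range he hA]
  exact rank_mul_le_right _ _

theorem stmt7_general [CommRing R] [IsDomain R] [Fintype m] [DecidableEq m] [Fintype o]
    {A : Matrix k n R} {f : m → k} {e : m → n} (he : Function.Injective e)
    (hA : ∀ i, ∀ j ∉ Set.range e, A (f i) j = 0) {M : Matrix n o R}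
    (hM : (M.submatrix e id).rank < Fintype.card m) (N : Matrix o p R) (c : m → p) :
    ((A * M * N).submatrix f c).det = 0 := by
  by_contra hdet
  have hfactor : (A * M * N).submatrix f c = (A * M).submatrix f id * N.submatrix id c :=
    submatrix_mul _ _ f id c Function.bijective_id
  have hrank : ((A * M * N).submatrix f c).rank < Fintype.card m :=
    calc ((A * M * N).submatrix f c).rank
      _ ≤ ((A * M).submatrix f id).rank := hfactor ▸ rank_mul_le_left _ _
      _ ≤ (M.submatrix e id).rank := rank_submatrix_mul_le_of_notMem_range he hA M
      _ < Fintype.card m := hM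
  exact hrank.ne (rank_of_det_ne_zero hdet)

end Rank

theorem isLowerSet_range_castLE {r n : ℕ} (h : r ≤ n) : IsLowerSet (Set.range (Fin.castLE h)) := by
  rw [Fin.range_castLE]
  exact fun _ _ hle hlt => (Fin.le_def.mp hle).trans_lt hlt

theorem apply_eq_zero_of_isLowerTriangular {R n : Type*} [Zero R] [LinearOrder n]
    {A : Matrix n n R} (hA : A.IsLowerTriangular) {s : Set n} (hs : IsLowerSet s)
    {i j : n} (hi : i ∈ s) (hj : j ∉ s) : A i j = 0 :=
  hA (lt_of_not_ge fun hle => hj (hs hle hi))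

/-- If `g` is an invertible lower triangular matrix and the first `r` rows of `M`
have rank `< r`, then the determinant of the top-left `r × r` block of
`g * M * g⁻¹` vanishes. -/
theorem stmt7 (K : Type*) [Field K] (n r : ℕ) (hn : 1 ≤ n) (hr1 : 1 ≤ r) (hrn : r ≤ n)
    (g : Matrix (Fin n) (Fin n) K) (hg : IsUnit g)
    (hgl : ∀ i j : Fin n, i < j → g i j = 0)
    (M : Matrix (Fin n) (Fin n) K)
    (hM : (M.submatrix (Fin.castLE hrn) id).rank < r) :
    ((g * M * g⁻¹).submatrix (Fin.castLE hrn) (Fin.castLE hrn)).det = 0 :=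
  stmt7_general (Fin.castLE_injective hrn)
    (fun i _ => apply_eq_zero_of_isLowerTriangular hgl (isLowerSet_range_castLE hrn) ⟨i, rfl⟩)
    (by rwa [Fintype.card_fin]) g⁻¹ (Fin.castLE hrn)
end
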